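/- Let G = S_n with n a positive integer, n ≠ 6, and let r be a ramification of G. Then the number N(G, r) of isomorphism classes of ramification systems with characters of G with ramification r equals ∏_{C ∈ K_r(G)} C(γ_C + r_C − 1, r_C), where C(a, b) is the binomial coefficient and, for a conjugacy class C of cycle type 1^{λ_1} 2^{λ_2} ⋯ n^{λ_n}, γ_C := (∏_{i : λ_i = 1} i) · (∏_{i : λ_i ≥ 2} 2i). -/

import Mathlib

/-- A ramification system with characters `RSC(G, r, χ⃗, u)` on a group `G`:
a ramification `r` assigning a nonnegative integer `r C` to each conjugacy class `C`
of `G`; a map `u` from conjugacy classes to `G` with `u C ∈ C`; and, for each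
conjugacy class `C`, an `r C`-tuple of characters of the centralizer `Z_{u C}`
(one-dimensional representations, i.e. group homomorphisms `Z_{u C} → ℂˣ`).
For classes with `r C = 0` the tuple of characters is empty, so `χ` carries
information exactly for the classes in `K_r(G) = {C : r C ≠ 0}`. -/
structure RSC (G : Type*) [Group G] where
  /-- the ramification -/
  r : ConjClasses G → ℕ
  /-- a choice of representative of each conjugacy class -/
  u : ConjClasses G → G
  hu : ∀ C : ConjClasses G, ConjClasses.mk (u C) = C
  /-- the tuple of characters of `Z_{u C}` attached to each conjugacy class `C` -/
  chi : ∀ C : ConjClasses G, Fin (r C) →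
    (Subgroup.centralizer ({u C} : Set G) →* ℂˣ)

/-- Isomorphism of ramification systems with characters (over the same group `G`),
following the definition of the paper: `RSC(G, r, χ⃗, u) ≅ RSC(G, r', χ⃗', u')` if there
are a group automorphism `φ` of `G`, for each conjugacy class `C` an element `h_C ∈ G`
with `φ(h_C u(C) h_C⁻¹) = u'(φ(C))`, and for each `C ∈ K_r(G)` a bijection
`φ_C : I_C(r) ≃ I_{φ(C)}(r')` such that
`χ'_{φ(C)}^{(φ_C(i))}(φ(h_C h h_C⁻¹)) = χ_C^{(i)}(h)` for all `h ∈ Z_{u(C)}` and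
all `i`. -/
def RSC.Iso {G : Type*} [Group G] (A B : RSC G) : Prop :=
  ∃ φ : G ≃* G,
    ∀ C : ConjClasses G, ∃ h : G,
      φ (h * A.u C * h⁻¹) = B.u (ConjClasses.map (φ : G →* G) C) ∧
      (A.r C ≠ 0 →
        ∃ e : Fin (A.r C) ≃ Fin (B.r (ConjClasses.map (φ : G →* G) C)),
          ∀ (i : Fin (A.r C)) (x : G)
            (hx : x ∈ Subgroup.centralizer ({A.u C} : Set G))
            (hx' : φ (h * x * h⁻¹) ∈
              Subgroup.centralizer ({B.u (ConjClasses.map (φ : G →* G) C)} : Set G)),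
            B.chi (ConjClasses.map (φ : G →* G) C) (e i) ⟨φ (h * x * h⁻¹), hx'⟩ =
              A.chi C i ⟨x, hx⟩)

/-- `lamOf g i` is the number `λ_i` of cycles of length `i` in the disjoint cycle
decomposition of the permutation `g`, fixed points counted as cycles of length `1`,
so that `g` has cycle type `1^{λ_1} 2^{λ_2} ⋯ n^{λ_n}`. -/
def lamOf {n : ℕ} (g : Equiv.Perm (Fin n)) (i : ℕ) : ℕ :=
  if i = 1 then (Finset.univ.filter fun x : Fin n => g x = x).card
  else Multiset.count i g.cycleType

/-!
For `n ≠ 6` an automorphism of `S_n` sends transpositions to transpositions, because the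
centralizer orders tell them apart from the other classes of involutions; hence it is inner. For a
group `G` all of whose automorphisms are inner, a ramification system amounts, up to isomorphism,
to an unordered `r C`-tuple of characters of one centralizer `Z_g` for each class `C` of some `g`:
inner automorphisms fix every class, and the transport of characters along a conjugation does not
depend on the conjugator, since characters are invariant under conjugation. Such tuples are counted
by multiset coefficients. Finally, the centralizer of `g ∈ S_n` is the product over `i` of the
wreath products `ℤ/i ≀ S_{λ_i}`; a character of `ℤ/i ≀ S_{λ_i}` is a pair of a character of `ℤ/i`
and one of `S_{λ_i}`, which gives `i` characters if `λ_i = 1` and `2 * i` if `λ_i ≥ 2`.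
-/

open Equiv Equiv.Perm

section Factorial

open scoped Nat

lemma two_pow_mul_factorial_lt {j : ℕ} (hj : 3 ≤ j) : 2 ^ j * (j + 1)! < (2 * j)! := by
  induction j, hj using Nat.le_induction with
  | base => decide
  | succ j hj ih =>
    have hstep : (2 * (j + 1))! = (2 * j + 2) * (2 * j + 1) * (2 * j)! := by
      rw [Nat.mul_succ, Nat.factorial_succ, Nat.factorial_succ, mul_assoc]
    rw [hstep]
    calc 2 ^ (j + 1) * (j + 1 + 1)! = 2 * (j + 2) * (2 ^ j * (j + 1)!) := by
          rw [Nat.factorial_succ (j + 1), pow_succ]; ring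
      _ ≤ (2 * j + 2) * (2 * j + 1) * (2 ^ j * (j + 1)!) :=
          Nat.mul_le_mul_right _ (by nlinarith)
      _ < (2 * j + 2) * (2 * j + 1) * (2 * j)! := by gcongr

-- Twice the two sides are the orders of the centralizers of a transposition and of a product of
-- `j + 1` disjoint transpositions of `m + 2 * (j + 1)` points.
lemma factorial_add_two_mul_ne {m j : ℕ} (hj : j ≠ 0) (h6 : m + 2 * (j + 1) ≠ 6) :
    (m + 2 * j)! ≠ 2 ^ j * (j + 1)! * m ! := by
  obtain rfl | rfl | hj : j = 1 ∨ j = 2 ∨ 3 ≤ j := by omega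
  · have hasc : (m + 1) * (m + 2) ≠ 4 := by
      rcases m with _ | m
      · decide
      · nlinarith
    rw [← Nat.factorial_mul_ascFactorial, mul_comm, Ne, Nat.mul_left_inj (Nat.factorial_ne_zero m)]
    simpa [Nat.ascFactorial, Nat.factorial, mul_comm] using hasc
  · have hasc : 24 < (m + 1) * (m + 2) * ((m + 3) * (m + 4)) :=
      calc 24 < (2 * 3) * (4 * 5) := by decide
        _ ≤ _ := by gcongr <;> omega
    have hasc' : (m + 1).ascFactorial 4 = (m + 1) * (m + 2) * ((m + 3) * (m + 4)) := by
      simp only [Nat.ascFactorial]; ring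
    rw [← Nat.factorial_mul_ascFactorial, mul_comm, Ne, Nat.mul_left_inj (Nat.factorial_ne_zero m),
      hasc']
    exact hasc.ne'
  · refine ne_of_gt ?_
    calc 2 ^ j * (j + 1)! * m ! < (2 * j)! * m ! :=
          Nat.mul_lt_mul_of_pos_right (two_pow_mul_factorial_lt hj) (Nat.factorial_pos m)
      _ ≤ (m + 2 * j)! := by
          rw [add_comm]
          exact Nat.le_of_dvd (Nat.factorial_pos _)
            (Nat.factorial_mul_factorial_dvd_factorial_add _ _)

end Factorial

section Centralizer

variable {G H : Type*} [Group G] [Group H]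

/-- The isomorphism between the centralizers of two elements matched by a group isomorphism. -/
def centralizerCongr (f : G ≃* H) {g : G} {h : H} (hgh : f g = h) :
    Subgroup.centralizer {g} ≃* Subgroup.centralizer {h} :=
  (f.subgroupMap (Subgroup.centralizer {g})).trans <| MulEquiv.subgroupCongr <| by
    ext x
    obtain ⟨y, rfl⟩ := f.surjective x
    rw [Subgroup.mem_centralizer_singleton_iff, ← hgh, ← map_mul, ← map_mul, f.injective.eq_iff,
      ← Subgroup.mem_centralizer_singleton_iff]
    exact Subgroup.mem_map_iff_mem f.injective

@[simp]
lemma coe_centralizerCongr (f : G ≃* H) {g : G} {h : H} (hgh : f g = h)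
    (x : Subgroup.centralizer {g}) : (centralizerCongr f hgh x : H) = f x := rfl

end Centralizer

section Automorphisms

variable {α : Type*}

lemma exists_apply_ne_of_not_commute {s t : Perm α} (h : ¬ Commute s t) :
    ∃ p, s p ≠ p ∧ t p ≠ p := by
  simpa only [Perm.Disjoint, not_forall, not_or] using mt Perm.Disjoint.commute h

variable [DecidableEq α]

lemma isSwap_map_of_card_ne_six [Fintype α] (h6 : Fintype.card α ≠ 6) (φ : Perm α ≃* Perm α)
    {s : Perm α} (hs : s.IsSwap) : (φ s).IsSwap := by
  have hord : orderOf (φ s) = 2 := by rw [MulEquiv.orderOf_eq, hs.orderOf]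
  obtain ⟨j, hj⟩ := cycleType_prime_order (hord.symm ▸ Nat.prime_two)
  rw [hord] at hj
  obtain rfl | hj0 := eq_or_ne j 0
  · rwa [isSwap_iff_cycleType]
  obtain ⟨m, hm⟩ : ∃ m, Fintype.card α = m + 2 * (j + 1) := by
    have := (φ s).sum_cycleType_le
    rw [hj, Multiset.sum_replicate, smul_eq_mul] at this
    exact ⟨Fintype.card α - 2 * (j + 1), by omega⟩
  have hcard := Nat.card_congr (centralizerCongr φ (rfl : φ s = φ s)).toEquiv
  rw [nat_card_centralizer, nat_card_centralizer, isSwap_iff_cycleType.1 hs, hj, hm] at hcard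
  refine absurd ?_ (factorial_add_two_mul_ne hj0 (hm ▸ h6))
  have hsub : m + 2 * (j + 1) - 2 = m + 2 * j := by omega
  simp only [Multiset.sum_singleton, hsub, Multiset.prod_singleton, Multiset.toFinset_singleton,
    Finset.prod_singleton, Multiset.count_singleton_self, Nat.factorial_one, mul_one,
    Multiset.sum_replicate, smul_eq_mul, Multiset.prod_replicate, Multiset.toFinset_replicate,
    Nat.add_one_ne_zero, if_false, Multiset.count_replicate_self,
    mul_comm (j + 1) 2, Nat.add_sub_cancel] at hcard
  rw [pow_succ] at hcard
  linarith

lemma eq_swap_apply_of_isSwap {s : Perm α} (hs : s.IsSwap) {x : α} (hx : s x ≠ x) :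
    s = swap x (s x) := by
  obtain ⟨a, b, -, rfl⟩ := hs
  obtain rfl | hxa := eq_or_ne x a
  · rw [swap_apply_left]
  obtain rfl | hxb := eq_or_ne x b
  · rw [swap_apply_right, swap_comm]
  · exact absurd (swap_apply_of_ne_of_ne hxa hxb) hx

lemma swap_mul_swap_mul_swap_of_ne {p a b : α} (hb : b ≠ p) (hab : b ≠ a) :
    swap p a * swap p b * swap p a = swap a b := by
  have h := swap_apply_apply (swap p a) p b
  rwa [swap_inv, swap_apply_left, swap_apply_of_ne_of_ne hb hab, eq_comm] at h

lemma not_commute_swap_swap {p a b : α} (ha : a ≠ p) (hb : b ≠ p) (hab : a ≠ b) :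
    ¬ Commute (swap p a) (swap p b) := fun h ↦ by
  have h' := congr($h a)
  simp only [Perm.mul_apply, swap_apply_right, swap_apply_of_ne_of_ne ha hab,
    swap_apply_left] at h'
  exact hb h'.symm

-- If `s i` and `s j` both move `p` and `s k` fixes it, then, commuting with neither, `s k` moves
-- both `s i p` and `s j p`, hence is `swap (s i p) (s j p) = s i * s j * s i`.
lemma exists_forall_apply_ne [Nonempty α] {ι : Type*} {s : ι → Perm α} (hs : ∀ i, (s i).IsSwap)
    (hcomm : ∀ i j, i ≠ j → ¬ Commute (s i) (s j))
    (htriple : ∀ i j k, i ≠ j → s i * s j * s i ≠ s k) : ∃ p, ∀ i, s i p ≠ p := by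
  obtain hι | hι := subsingleton_or_nontrivial ι
  · obtain hι' | ⟨⟨i⟩⟩ := isEmpty_or_nonempty ι
    · exact ⟨Classical.arbitrary α, isEmptyElim⟩
    · obtain ⟨a, b, hab, hi⟩ := hs i
      refine ⟨a, fun j ↦ ?_⟩
      rw [Subsingleton.elim j i, hi, swap_apply_left]
      exact hab.symm
  obtain ⟨i, j, hij⟩ := exists_pair_ne ι
  obtain ⟨p, hip, hjp⟩ := exists_apply_ne_of_not_commute (hcomm i j hij)
  have hi := eq_swap_apply_of_isSwap (hs i) hip
  have hj := eq_swap_apply_of_isSwap (hs j) hjp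
  have hne : s j p ≠ s i p := fun h ↦ hcomm i j hij (by rw [hi, hj, h])
  refine ⟨p, fun k hkp ↦ ?_⟩
  have moves {l : ι} (hlp : s l p ≠ p) : s k (s l p) ≠ s l p := by
    have hkl : k ≠ l := by rintro rfl; exact hlp hkp
    obtain ⟨q, hkq, hlq⟩ := exists_apply_ne_of_not_commute (hcomm k l hkl)
    rw [eq_swap_apply_of_isSwap (hs l) hlp] at hlq
    obtain rfl | rfl := (swap_apply_ne_self_iff.1 hlq).2
    · exact absurd hkp hkq
    · exact hkq
  have hk := eq_swap_apply_of_isSwap (hs k) (moves hip)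
  have hkj : s j p = s k (s i p) := by
    have hmove := moves hjp
    rw [hk] at hmove
    exact (swap_apply_ne_self_iff.1 hmove).2.resolve_left hne
  refine htriple i j k hij ?_
  rw [hk, ← hkj, ← swap_mul_swap_mul_swap_of_ne hjp hne, ← hi, ← hj]

lemma monoidHom_ext_isSwap [Finite α] {M : Type*} [Monoid M] {f g : Perm α →* M}
    (h : ∀ s : Perm α, s.IsSwap → f s = g s) : f = g :=
  MonoidHom.eq_of_eqOn_topM <| mclosure_isSwap (α := α) ▸ MonoidHom.eqOn_closureM h

lemma exists_forall_map_swap_apply_ne {φ : Perm α ≃* Perm α}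
    (hφ : ∀ s : Perm α, s.IsSwap → (φ s).IsSwap) (x₀ : α) :
    ∃ p, ∀ i, i ≠ x₀ → φ (swap x₀ i) p ≠ p := by
  have : Nonempty α := ⟨x₀⟩
  let s (i : {i // i ≠ x₀}) : Perm α := φ (swap x₀ i)
  have hs i : (s i).IsSwap := hφ _ ⟨x₀, i, i.2.symm, rfl⟩
  have hcomm i j (hij : i ≠ j) : ¬ Commute (s i) (s j) := fun h ↦
    not_commute_swap_swap i.2 j.2 (Subtype.coe_ne_coe.2 hij) ((commute_map_iff φ.injective).1 h)
  have htriple i j k (hij : i ≠ j) : s i * s j * s i ≠ s k := fun h ↦ by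
    have h' : swap (i : α) j = swap x₀ k := φ.injective <| by
      rw [← swap_mul_swap_mul_swap_of_ne j.2 (Subtype.coe_ne_coe.2 hij.symm), map_mul, map_mul]
      exact h
    have h₀ := congr($h' x₀)
    rw [swap_apply_left, swap_apply_of_ne_of_ne i.2.symm j.2.symm] at h₀
    exact k.2 h₀.symm
  obtain ⟨p, hp⟩ := exists_forall_apply_ne hs hcomm htriple
  exact ⟨p, fun i hi ↦ hp ⟨i, hi⟩⟩

lemma exists_eq_conj_of_isSwap_map [Finite α] {φ : Perm α ≃* Perm α}
    (hφ : ∀ s : Perm α, s.IsSwap → (φ s).IsSwap) : ∃ k : Perm α, φ = MulAut.conj k := by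
  obtain hα | ⟨⟨x₀⟩⟩ := isEmpty_or_nonempty α
  · exact ⟨1, MulEquiv.ext fun _ ↦ Subsingleton.elim _ _⟩
  obtain ⟨p, hp⟩ := exists_forall_map_swap_apply_ne hφ x₀
  have hstar (i : α) : φ (swap x₀ i) = swap p (φ (swap x₀ i) p) := by
    obtain rfl | hi := eq_or_ne i x₀
    · simp [← Perm.one_def]
    · exact eq_swap_apply_of_isSwap (hφ _ ⟨x₀, i, hi.symm, rfl⟩) (hp i hi)
  have hinj : Function.Injective fun i ↦ φ (swap x₀ i) p := fun i j hij ↦ by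
    have h : swap x₀ i = swap x₀ j := φ.injective <|
      (hstar i).trans ((congrArg (swap p) hij).trans (hstar j).symm)
    simpa using congr($h x₀)
  let k : Perm α := Equiv.ofBijective _ (Finite.injective_iff_bijective.1 hinj)
  have hk₀ : k x₀ = p := by simp [k, ← Perm.one_def]
  have hconj (i : α) : φ (swap x₀ i) = MulAut.conj k (swap x₀ i) := by
    rw [MulAut.conj_apply, ← swap_apply_apply, hk₀]
    exact hstar i
  have hext : φ.toMonoidHom = (MulAut.conj k).toMonoidHom := monoidHom_ext_isSwap <| by
    rintro _ ⟨i, j, hij, rfl⟩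
    change φ (swap i j) = MulAut.conj k (swap i j)
    obtain rfl | hj := eq_or_ne j x₀
    · rw [swap_comm, hconj]
    · rw [← swap_mul_swap_mul_swap_of_ne hj hij.symm]
      simp only [map_mul, hconj]
  exact ⟨k, MulEquiv.toMonoidHom_injective hext⟩

end Automorphisms

lemma exists_eq_conj_of_card_ne_six {α : Type*} [Fintype α] (h6 : Fintype.card α ≠ 6)
    (φ : Perm α ≃* Perm α) : ∃ k : Perm α, φ = MulAut.conj k := by
  classical
  exact exists_eq_conj_of_isSwap_map fun _ ↦ isSwap_map_of_card_ne_six h6 φ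

section CharactersOfPerm

variable {K : Type*}

lemma map_eq_map_of_isSwap [DecidableEq K] {A : Type*} [CommMonoid A] (f : Perm K →* A)
    {s t : Perm K} (hs : s.IsSwap) (ht : t.IsSwap) : f s = f t := by
  obtain ⟨a, b, hab, rfl⟩ := hs
  obtain ⟨c, d, hcd, rfl⟩ := ht
  exact isConj_iff_eq.1 (f.map_isConj (isConj_swap hab hcd))

lemma card_monoidHom_perm (K : Type*) [Finite K] (R : Type*) [CommRing R] [NoZeroDivisors R]
    (h2 : (-1 : R) ≠ 1) :
    Nat.card (Perm K →* Rˣ) = if Nat.card K ≤ 1 then 1 else 2 := by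
  classical
  have := Fintype.ofFinite K
  split_ifs with hK
  · have : Subsingleton K := Finite.card_le_one_iff_subsingleton.1 hK
    have : Subsingleton (Perm K →* Rˣ) := ⟨fun f g ↦ MonoidHom.ext fun s ↦ by
      rw [Subsingleton.elim s 1, map_one, map_one]⟩
    exact Nat.card_unique
  · have : Nontrivial K := Finite.one_lt_card_iff_nontrivial.1 (not_le.1 hK)
    obtain ⟨a, b, hab⟩ := exists_pair_ne K
    let sgn : Perm K →* Rˣ := (Units.map (Int.castRingHom R : ℤ →* R)).comp sign
    have hsgn (s : Perm K) (hs : s.IsSwap) : sgn s = -1 := by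
      ext; simp [sgn, hs.sign_eq]
    have hswap : (swap a b).IsSwap := ⟨a, b, hab, rfl⟩
    refine Nat.card_eq_two_iff.2 ⟨1, sgn, fun h ↦ h2 ?_, Set.eq_univ_iff_forall.2 fun f ↦ ?_⟩
    · simpa [hsgn _ hswap] using congr(($h (swap a b) : R)).symm
    · have hsq : f (swap a b) * f (swap a b) = 1 := by
        rw [← map_mul, swap_mul_self, map_one]
      obtain h | h := Units.ext_iff.1 hsq |> mul_self_eq_one_iff.1
      · exact .inl <| monoidHom_ext_isSwap fun s hs ↦
          (map_eq_map_of_isSwap f hs hswap).trans (Units.ext h)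
      · exact .inr <| monoidHom_ext_isSwap fun s hs ↦
          (map_eq_map_of_isSwap f hs hswap).trans ((Units.ext h).trans (hsgn s hs).symm)

end CharactersOfPerm

section WreathProduct

lemma card_monoidHom_pi {I : Type*} [Fintype I] (H : I → Type*) [∀ i, Monoid (H i)]
    (A : Type*) [CommMonoid A] :
    Nat.card ((∀ i, H i) →* A) = ∏ i, Nat.card (H i →* A) := by
  classical
  rw [← Nat.card_pi, ← Nat.card_congr MonoidHom.noncommPiCoprodEquiv]
  exact Nat.card_congr (Equiv.subtypeUnivEquiv fun _ _ _ _ _ _ ↦ Commute.all _ _)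

variable {K : Type*}

/-- The wreath product `B ≀ K` of a group `B` with the full symmetric group on `K`, as the
semidirect product for the action of `Perm K` on `K → B` by `(σ • b) k = b (σ⁻¹ k)`. -/
abbrev PermWreathProduct (B K : Type*) [Group B] : Type _ :=
  (K → B) ⋊[(mulAutArrow : Perm K →* MulAut (K → B))] Perm K

variable {B A : Type*} [Group B]

lemma mulAutArrow_perm_apply (σ : Perm K) (b : K → B) (k : K) :
    (mulAutArrow σ : MulAut (K → B)) b k = b (σ⁻¹ k) := rfl

lemma PermWreathProduct.inl_mulSingle_apply [DecidableEq K] (σ : Perm K) (k : K) (b : B) :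
    (.inl (Pi.mulSingle (σ k) b) : PermWreathProduct B K) =
      .inr σ * .inl (Pi.mulSingle k b) * .inr σ⁻¹ := by
  rw [← SemidirectProduct.inl_aut]
  congr 1
  ext l
  simp [-mulAutArrow_apply_apply, mulAutArrow_perm_apply, Pi.mulSingle_apply,
    Equiv.symm_apply_eq]

lemma PermWreathProduct.hom_ext [Finite K] [DecidableEq K] [CommGroup A]
    {χ ψ : PermWreathProduct B K →* A} (k₀ : K)
    (hl : ∀ b, χ (.inl (Pi.mulSingle k₀ b)) = ψ (.inl (Pi.mulSingle k₀ b)))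
    (hr : χ.comp SemidirectProduct.inr = ψ.comp SemidirectProduct.inr) : χ = ψ := by
  refine SemidirectProduct.hom_ext ?_ hr
  -- The factors of the base group `K → B` are conjugate under `Perm K`.
  have hinl (f : PermWreathProduct B K →* A) (k : K) (b : B) :
      f (.inl (Pi.mulSingle k b)) = f (.inl (Pi.mulSingle k₀ b)) := by
    conv_lhs =>
      rw [← swap_apply_left k₀ k, inl_mulSingle_apply, map_mul, map_mul, map_inv, map_inv,
        mul_inv_cancel_comm]
  exact MonoidHom.pi_ext fun k b ↦ (hinl χ k b).trans ((hl b).trans (hinl ψ k b).symm)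

lemma PermWreathProduct.card_monoidHom [Finite K] [Nonempty K] [CommGroup A] :
    Nat.card (PermWreathProduct B K →* A) = Nat.card (B →* A) * Nat.card (Perm K →* A) := by
  classical
  have := Fintype.ofFinite K
  obtain ⟨k₀⟩ := ‹Nonempty K›
  let restr (χ : PermWreathProduct B K →* A) : (B →* A) × (Perm K →* A) :=
    ((χ.comp SemidirectProduct.inl).comp (MonoidHom.mulSingle (fun _ ↦ B) k₀),
      χ.comp SemidirectProduct.inr)
  rw [← Nat.card_prod]
  refine Nat.card_congr (Equiv.ofBijective restr ⟨fun χ ψ h ↦ ?_, fun ⟨f, g⟩ ↦ ?_⟩)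
  · obtain ⟨hl, hr⟩ := Prod.ext_iff.1 h
    exact hom_ext k₀ (DFunLike.congr_fun hl) hr
  · have hconj (σ : Perm K) : (∏ k, f.comp (Pi.evalMonoidHom _ k)).comp
        (mulAutArrow σ : MulAut (K → B)).toMonoidHom =
          (MulAut.conj (g σ)).toMonoidHom.comp (∏ k, f.comp (Pi.evalMonoidHom _ k)) := by
      ext b
      simpa [-mulAutArrow_apply_apply, MonoidHom.finsetProd_apply, mulAutArrow_perm_apply] using
        Equiv.prod_comp σ⁻¹ fun k ↦ f (b k)
    refine ⟨SemidirectProduct.lift _ g hconj, Prod.ext (MonoidHom.ext fun b ↦ ?_) ?_⟩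
    · simp [restr, MonoidHom.finsetProd_apply, Pi.mulSingle_apply, apply_ite f]
    · exact SemidirectProduct.lift_comp_inr _ _ _

end WreathProduct

section ShiftPerm

variable (K : Type*) (m : ℕ)

/-- The permutation of `K × ZMod m` with a cycle of length `m` for each element of `K`. -/
def shiftPerm : Perm (K × ZMod m) := Equiv.prodCongr (Equiv.refl K) (Equiv.addRight 1)

variable {K m}

lemma shiftPerm_zpow_apply (j : ℤ) (p : K × ZMod m) : (shiftPerm K m ^ j) p = (p.1, p.2 + j) := by
  induction j using Int.induction_on with
  | zero => simp
  | succ j ih =>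
    rw [zpow_add_one, Commute.self_zpow _ _ |>.eq.symm, Perm.mul_apply, ih]
    simp [shiftPerm, add_assoc]
  | pred j ih =>
    rw [sub_eq_neg_add, zpow_add, zpow_neg_one, Perm.mul_apply, ih, inv_eq_iff_eq]
    simp [shiftPerm, add_assoc]

lemma apply_mk_of_mem_centralizer_shiftPerm {w : Perm (K × ZMod m)}
    (hw : w ∈ Subgroup.centralizer {shiftPerm K m}) (k : K) (x : ZMod m) :
    w (k, x) = ((w (k, 0)).1, (w (k, 0)).2 + x) := by
  obtain ⟨j, rfl⟩ := ZMod.intCast_surjective x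
  have hcomm : Commute w (shiftPerm K m) := Subgroup.mem_centralizer_singleton_iff.1 hw
  have h := congr($(hcomm.zpow_right j) (k, 0))
  rwa [Perm.mul_apply, Perm.mul_apply, shiftPerm_zpow_apply, shiftPerm_zpow_apply, zero_add] at h

/-- The action of `ZMod m ≀ K` on `K × ZMod m`, which commutes with `shiftPerm K m`. -/
def PermWreathProduct.toCentralizer :
    PermWreathProduct (Multiplicative (ZMod m)) K →* Subgroup.centralizer {shiftPerm K m} where
  toFun w := ⟨prodShear w.right fun k ↦ Equiv.addLeft (w.left (w.right k)).toAdd, by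
    rw [Subgroup.mem_centralizer_singleton_iff]
    ext1 p
    simp [shiftPerm, add_assoc]⟩
  map_one' := by ext p <;> simp
  map_mul' v w := by
    ext p <;> simp [-mulAutArrow_apply_apply, mulAutArrow_perm_apply]

lemma PermWreathProduct.toCentralizer_bijective :
    Function.Bijective (toCentralizer : PermWreathProduct (Multiplicative (ZMod m)) K →* _) := by
  constructor
  · intro v w h
    have h' (k : K) : (v.right k, (v.left (v.right k)).toAdd) =
        (w.right k, (w.left (w.right k)).toAdd) := by
      simpa [toCentralizer] using congr(($h : Perm (K × ZMod m)) (k, 0))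
    have hright : v.right = w.right := Equiv.ext fun k ↦ congrArg Prod.fst (h' k)
    refine SemidirectProduct.ext (funext fun k ↦ ?_) hright
    have hleft := congrArg Prod.snd (h' (v.right.symm k))
    rwa [← hright, Equiv.apply_symm_apply] at hleft
  · rintro ⟨w, hw⟩
    have h_apply := apply_mk_of_mem_centralizer_shiftPerm hw
    have h_inv := apply_mk_of_mem_centralizer_shiftPerm (inv_mem hw)
    let σ : Perm K := {
      toFun k := (w (k, 0)).1
      invFun k := (w⁻¹ (k, 0)).1
      left_inv k := by
        simpa using (congrArg Prod.fst (h_inv (w (k, 0)).1 (w (k, 0)).2)).symm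
      right_inv k := by
        simpa using (congrArg Prod.fst (h_apply (w⁻¹ (k, 0)).1 (w⁻¹ (k, 0)).2)).symm }
    refine ⟨⟨fun k ↦ .ofAdd (w (σ.symm k, 0)).2, σ⟩, Subtype.ext <| Equiv.ext fun ⟨k, x⟩ ↦ ?_⟩
    change (σ k, (w (σ.symm (σ k), 0)).2 + x) = w (k, x)
    rw [σ.symm_apply_apply, h_apply k x]
    rfl

lemma card_monoidHom_centralizer_shiftPerm {A : Type*} [CommGroup A] [Finite K] [Nonempty K] :
    Nat.card (Subgroup.centralizer {shiftPerm K m} →* A) =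
      Nat.card (Multiplicative (ZMod m) →* A) * Nat.card (Perm K →* A) := by
  let e := MulEquiv.ofBijective _ (PermWreathProduct.toCentralizer_bijective (K := K) (m := m))
  rw [← PermWreathProduct.card_monoidHom, Nat.card_congr e.monoidHomCongrLeftEquiv]

lemma exists_permCongrHom_eq_shiftPerm {β : Type*} [Finite β] {h : Perm β} (hm : m ≠ 0)
    (hh : ∀ x, Function.minimalPeriod h x = m) :
    ∃ e : β ≃ Quotient (SameCycle.setoid h) × ZMod m, e.permCongrHom h = shiftPerm _ m := by
  have : NeZero m := ⟨hm⟩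
  let F (p : Quotient (SameCycle.setoid h) × ZMod m) : β := h^[p.2.val] p.1.out
  have hmod (t : ℕ) (x : β) : h^[t % m] x = h^[t] x := by
    rw [← hh x, Function.iterate_mod_minimalPeriod_eq]
  have hF_fst p : (⟦F p⟧ : Quotient (SameCycle.setoid h)) = p.1 := by
    rw [Quotient.mk_eq_iff_out]
    exact sameCycle_pow_left.2 (SameCycle.refl _ _)
  have hF_shift p : F (shiftPerm _ m p) = h (F p) := by
    obtain ⟨q, x⟩ := p
    obtain ⟨t, rfl⟩ := ZMod.natCast_zmod_surjective x
    change h^[((t : ZMod m) + 1).val] q.out = h (h^[(t : ZMod m).val] q.out)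
    rw [← Nat.cast_succ, ZMod.val_natCast, ZMod.val_natCast, hmod, hmod,
      Function.iterate_succ_apply']
  have hF : Function.Bijective F := by
    refine ⟨fun ⟨p, x⟩ ⟨q, y⟩ hpq ↦ ?_, fun y ↦ ?_⟩
    · obtain rfl : p = q := (hF_fst (p, x)).symm.trans ((congrArg _ hpq).trans (hF_fst (q, y)))
      refine congrArg (Prod.mk p) (ZMod.val_injective m ?_)
      exact (Function.iterate_injOn_Iio_minimalPeriod (f := h) (x := p.out))
        (by rw [hh]; exact ZMod.val_lt x) (by rw [hh]; exact ZMod.val_lt y) hpq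
    · obtain ⟨t, ht⟩ := SameCycle.exists_nat_pow_eq (Quotient.mk_out (s := SameCycle.setoid h) y)
      refine ⟨(⟦y⟧, (t : ZMod m)), ?_⟩
      simp only [F]
      rw [ZMod.val_natCast, hmod]
      exact ht
  refine ⟨(Equiv.ofBijective F hF).symm, Equiv.ext fun p ↦ ?_⟩
  rw [Equiv.permCongrHom_coe, Equiv.permCongr_apply, Equiv.symm_symm, Equiv.symm_apply_eq,
    Equiv.ofBijective_apply, Equiv.ofBijective_apply, hF_shift]

end ShiftPerm

section CentralizerCharacters

lemma card_centralizer_shiftPerm_characters (K : Type*) [Finite K] [Nonempty K] {m : ℕ}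
    (hm : m ≠ 0) :
    Nat.card (Subgroup.centralizer {shiftPerm K m} →* ℂˣ) =
      if Nat.card K = 1 then m else 2 * m := by
  have : NeZero m := ⟨hm⟩
  have hK : 0 < Nat.card K := Nat.card_pos
  rw [card_monoidHom_centralizer_shiftPerm, CommGroup.card_monoidHom_of_hasEnoughRootsOfUnity,
    card_monoidHom_perm K ℂ (by norm_num), Nat.card_congr Multiplicative.toAdd, Nat.card_zmod]
  split_ifs <;> omega

lemma card_centralizer_characters_of_forall_minimalPeriod_eq {β : Type*} [Finite β] [Nonempty β]
    {h : Perm β} {m : ℕ} (hm : m ≠ 0) (hh : ∀ x, Function.minimalPeriod h x = m) :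
    Nat.card (Subgroup.centralizer {h} →* ℂˣ) = if Nat.card β = m then m else 2 * m := by
  obtain ⟨e, he⟩ := exists_permCongrHom_eq_shiftPerm hm hh
  have : Nonempty (Quotient (SameCycle.setoid h)) := ‹Nonempty β›.map (Quotient.mk _)
  rw [Nat.card_congr (centralizerCongr e.permCongrHom he).monoidHomCongrLeftEquiv,
    card_centralizer_shiftPerm_characters _ hm, Nat.card_congr e, Nat.card_prod, Nat.card_zmod]
  simp only [mul_eq_right₀ hm]

variable {α I : Type*} {g : Perm α} {c : α → I}

/-- Permutations commuting with `g` and preserving a colouring `c` restrict to the fibres of `c`,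
where they commute with the restriction of `g`. -/
def centralizerRestrict (hc : ∀ f ∈ Subgroup.centralizer {g}, ∀ x, c (f x) = c x) :
    Subgroup.centralizer {g} →* ∀ i, Subgroup.centralizer
      {g.subtypePerm (p := (c · = i)) fun x ↦
        by rw [hc g (Subgroup.mem_centralizer_singleton_iff.2 rfl)]} where
  toFun f i := ⟨f.1.subtypePerm fun x ↦ by rw [hc f.1 f.2], by
    rw [Subgroup.mem_centralizer_singleton_iff]
    ext x
    exact congr($(Subgroup.mem_centralizer_singleton_iff.1 f.2) x.1)⟩
  map_one' := rfl
  map_mul' _ _ := rfl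

lemma centralizerRestrict_bijective
    (hc : ∀ f ∈ Subgroup.centralizer {g}, ∀ x, c (f x) = c x) :
    Function.Bijective (centralizerRestrict hc) := by
  have hg : ∀ x, c (g x) = c x := hc g (Subgroup.mem_centralizer_singleton_iff.2 rfl)
  refine ⟨fun f f' h ↦ Subtype.ext <| Equiv.ext fun x ↦ ?_, fun F ↦ ?_⟩
  · exact congr((($h (c x)).1 ⟨x, rfl⟩).1)
  · let f : Perm α := (sigmaFiberEquiv c).permCongr (Perm.sigmaCongrRight fun i ↦ (F i).1)
    have hf {i : I} {x : α} (hx : c x = i) : f x = ((F i).1 ⟨x, hx⟩).1 := by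
      subst hx; rfl
    have hfg : f * g = g * f := Equiv.ext fun x ↦ by
      rw [Perm.mul_apply, Perm.mul_apply, hf (hg x), hf rfl]
      exact congr(($(Subgroup.mem_centralizer_singleton_iff.1 (F (c x)).2) ⟨x, rfl⟩).1)
    refine ⟨⟨f, Subgroup.mem_centralizer_singleton_iff.2 hfg⟩, funext fun i ↦ ?_⟩
    ext ⟨x, hx⟩
    exact hf hx

lemma minimalPeriod_apply_of_mem_centralizer {f : Perm α} (hf : f ∈ Subgroup.centralizer {g})
    (x : α) : Function.minimalPeriod g (f x) = Function.minimalPeriod g x := by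
  have hfg : Function.Commute f g := fun y ↦
    congr($(Subgroup.mem_centralizer_singleton_iff.1 hf) y)
  refine Function.minimalPeriod_eq_minimalPeriod_iff.2 fun t ↦ ?_
  rw [Function.IsPeriodicPt, Function.IsFixedPt, ← hfg.iterate_right t, f.injective.eq_iff]
  rfl

lemma minimalPeriod_subtypePerm {p : α → Prop} (hp : ∀ x, p (g x) ↔ p x) (x : {x // p x}) :
    Function.minimalPeriod (g.subtypePerm hp) x = Function.minimalPeriod g x := by
  have hval : Function.Semiconj Subtype.val (g.subtypePerm hp) g := fun _ ↦ rfl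
  refine Function.minimalPeriod_eq_minimalPeriod_iff.2 fun t ↦ ?_
  rw [Function.IsPeriodicPt, Function.IsFixedPt, Subtype.ext_iff, hval.iterate_right t]
  rfl

lemma minimalPeriod_perm_pos [Finite α] (g : Perm α) (x : α) : 0 < Function.minimalPeriod g x :=
  Function.minimalPeriod_pos_of_mem_periodicPts (g.injective.mem_periodicPts x)

lemma card_centralizer_characters [Fintype α] (g : Perm α) :
    Nat.card (Subgroup.centralizer {g} →* ℂˣ) =
      ∏ i ∈ Finset.univ.image (Function.minimalPeriod g),
        if Nat.card {x // Function.minimalPeriod g x = i} = i then i else 2 * i := by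
  let c (x : α) : Finset.univ.image (Function.minimalPeriod g) :=
    ⟨_, Finset.mem_image_of_mem _ (Finset.mem_univ x)⟩
  have hc : ∀ f ∈ Subgroup.centralizer {g}, ∀ x, c (f x) = c x := fun f hf x ↦
    Subtype.ext (minimalPeriod_apply_of_mem_centralizer hf x)
  rw [Nat.card_congr (MulEquiv.ofBijective _
      (centralizerRestrict_bijective hc)).monoidHomCongrLeftEquiv,
    card_monoidHom_pi, ← Finset.prod_coe_sort (Finset.univ.image _)]
  refine Finset.prod_congr rfl fun ⟨i, hi⟩ _ ↦ ?_
  obtain ⟨x, -, rfl⟩ := Finset.mem_image.1 hi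
  have : Nonempty {y // c y = c x} := ⟨x, rfl⟩
  refine (card_centralizer_characters_of_forall_minimalPeriod_eq
    (minimalPeriod_perm_pos g x).ne' fun y ↦ ?_).trans ?_
  · exact (minimalPeriod_subtypePerm _ y).trans (congrArg Subtype.val y.2)
  · rw [Nat.card_congr (Equiv.subtypeEquivRight fun y ↦ Subtype.ext_iff)]

end CentralizerCharacters

section CycleType

variable {α : Type*} [Fintype α] [DecidableEq α] (g : Perm α)

lemma minimalPeriod_eq_card_support_cycleOf {x : α} (hx : g x ≠ x) :
    Function.minimalPeriod g x = (g.cycleOf x).support.card := by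
  refine Nat.dvd_right_iff_eq.1 fun t ↦ ?_
  rw [← Function.isPeriodicPt_iff_minimalPeriod_dvd, Function.IsPeriodicPt, Function.IsFixedPt,
    iterate_eq_pow, (isCycleOn_support_cycleOf g x).pow_apply_eq
      (mem_support_cycleOf_iff.2 ⟨SameCycle.refl _ _, mem_support.2 hx⟩)]

lemma filter_minimalPeriod_eq_biUnion_support {i : ℕ} (hi : i ≠ 1) :
    Finset.univ.filter (Function.minimalPeriod g · = i) =
      (g.cycleFactorsFinset.filter (·.support.card = i)).biUnion support := by
  ext x
  simp only [Finset.mem_filter, Finset.mem_univ, true_and, Finset.mem_biUnion]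
  constructor
  · rintro rfl
    have hx : g x ≠ x := fun h ↦ hi (Function.minimalPeriod_eq_one_iff_isFixedPt.2 h)
    exact ⟨g.cycleOf x, ⟨cycleOf_mem_cycleFactorsFinset_iff.2 (mem_support.2 hx),
      (minimalPeriod_eq_card_support_cycleOf g hx).symm⟩,
      mem_support_cycleOf_iff.2 ⟨SameCycle.refl _ _, mem_support.2 hx⟩⟩
  · rintro ⟨c, ⟨hc, rfl⟩, hxc⟩
    have hx : g x ≠ x := mem_support.1 (mem_cycleFactorsFinset_support_le hc hxc)
    rw [minimalPeriod_eq_card_support_cycleOf g hx, cycle_is_cycleOf hxc hc]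

lemma count_cycleType_mul {i : ℕ} (hi : i ≠ 1) :
    g.cycleType.count i * i = Nat.card {x // Function.minimalPeriod g x = i} := by
  have hdisj : Set.PairwiseDisjoint
      (g.cycleFactorsFinset.filter (·.support.card = i) : Set (Perm α)) support :=
    fun c hc d hd hcd ↦ (g.cycleFactorsFinset_pairwise_disjoint (Finset.mem_filter.1 hc).1
      (Finset.mem_filter.1 hd).1 hcd).disjoint_support
  rw [Nat.subtype_card _ (fun _ ↦ Finset.mem_filter_univ _),
    filter_minimalPeriod_eq_biUnion_support g hi, Finset.card_biUnion hdisj,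
    Finset.sum_const_nat fun c hc ↦ (Finset.mem_filter.1 hc).2, cycleType_def, Multiset.count_map]
  simp only [Function.comp_apply, eq_comm (a := i)]
  rfl

end CycleType

section lamOf

variable {n : ℕ} (g : Perm (Fin n)) (i : ℕ)

lemma lamOf_mul : lamOf g i * i = Nat.card {x // Function.minimalPeriod g x = i} := by
  obtain rfl | hi := eq_or_ne i 1
  · rw [mul_one, lamOf, if_pos rfl]
    exact (Nat.subtype_card _ fun x ↦ by
      rw [Finset.mem_filter_univ, Function.minimalPeriod_eq_one_iff_isFixedPt]; rfl).symm
  · rw [lamOf, if_neg hi, count_cycleType_mul g hi]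

lemma lamOf_pos_iff : 0 < lamOf g i ↔ i ∈ Finset.univ.image (Function.minimalPeriod g) := by
  simp only [Finset.mem_image, Finset.mem_univ, true_and]
  constructor
  · intro hi
    have hi0 : i ≠ 0 := by
      rintro rfl
      rw [lamOf, if_neg zero_ne_one, Multiset.count_pos] at hi
      exact absurd (two_le_of_mem_cycleType hi) (by norm_num)
    have hcard := lamOf_mul g i ▸ Nat.mul_pos hi (Nat.pos_of_ne_zero hi0)
    obtain ⟨⟨x, hx⟩⟩ := (Nat.card_pos_iff.1 hcard).1
    exact ⟨x, hx⟩
  · rintro ⟨x, rfl⟩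
    have : Nonempty {y // Function.minimalPeriod g y = Function.minimalPeriod g x} := ⟨x, rfl⟩
    exact Nat.pos_of_mul_pos_right (lamOf_mul g _ ▸ Nat.card_pos)

lemma card_centralizer_characters_eq_prod_lamOf :
    Nat.card (Subgroup.centralizer {g} →* ℂˣ) =
      (∏ i ∈ (Finset.range (n + 1)).filter fun i => lamOf g i = 1, i) *
        (∏ i ∈ (Finset.range (n + 1)).filter fun i => 2 ≤ lamOf g i, 2 * i) := by
  have hsub : Finset.univ.image (Function.minimalPeriod g) ⊆ Finset.range (n + 1) :=
    Finset.image_subset_iff.2 fun x _ ↦ Finset.mem_range_succ_iff.2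
      (Function.minimalPeriod_le_card.trans_eq (Fintype.card_fin n))
  rw [card_centralizer_characters, Finset.prod_filter, Finset.prod_filter,
    ← Finset.prod_mul_distrib, ← Finset.prod_subset hsub]
  · refine Finset.prod_congr rfl fun i hi ↦ ?_
    have hlam : 0 < lamOf g i := (lamOf_pos_iff g i).2 hi
    obtain ⟨x, -, rfl⟩ := Finset.mem_image.1 hi
    simp only [← lamOf_mul, mul_eq_right₀ (minimalPeriod_perm_pos g x).ne']
    split_ifs <;> omega
  · intro i _ hi
    have hlam : lamOf g i = 0 := Nat.eq_zero_of_not_pos (mt (lamOf_pos_iff g i).1 hi)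
    simp [hlam]

end lamOf

section CharacterTransport

variable {G A : Type*} [Group G] [CommGroup A]

lemma isConj_iff_conj_apply_eq {u v : G} : IsConj u v ↔ ∃ k, MulAut.conj k u = v := isConj_iff

/-- The identification of the `A`-valued characters of the centralizers of two conjugate elements
induced by a chosen conjugating element; `characterEquivOfIsConj_apply` shows that it does not
depend on that choice. -/
noncomputable def characterEquivOfIsConj {u v : G} (huv : IsConj u v) :
    (Subgroup.centralizer {u} →* A) ≃ (Subgroup.centralizer {v} →* A) :=
  (centralizerCongr _ (isConj_iff_conj_apply_eq.1 huv).choose_spec).monoidHomCongrLeftEquiv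

-- Two conjugators from `u` to `v` differ by an element `z` of the centralizer of `u`, and `χ` is
-- invariant under conjugation by `z` because `A` is commutative.
lemma characterEquivOfIsConj_apply {u v : G} (huv : IsConj u v) {k : G}
    (hk : MulAut.conj k u = v) (χ : Subgroup.centralizer {u} →* A)
    (x : Subgroup.centralizer {u}) :
    characterEquivOfIsConj huv χ (centralizerCongr (MulAut.conj k) hk x) = χ x := by
  set c := (isConj_iff_conj_apply_eq.1 huv).choose
  have hcu : MulAut.conj c u = v := (isConj_iff_conj_apply_eq.1 huv).choose_spec
  have hz : c⁻¹ * k ∈ Subgroup.centralizer {u} := by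
    rw [Subgroup.mem_centralizer_singleton_iff, ← mul_inv_eq_iff_eq_mul, ← MulAut.conj_apply,
      map_mul, MulAut.mul_apply, hk, ← hcu, map_inv, MulAut.inv_apply_self]
  let z : Subgroup.centralizer {u} := ⟨c⁻¹ * k, hz⟩
  have hx : (centralizerCongr (MulAut.conj c) hcu).symm (centralizerCongr (MulAut.conj k) hk x) =
      z * x * z⁻¹ := by
    rw [MulEquiv.symm_apply_eq]
    ext
    simp [z, mul_assoc]
  change χ ((centralizerCongr (MulAut.conj c) hcu).symm _) = χ x
  rw [hx, map_mul, map_mul, map_inv, mul_inv_cancel_comm]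

lemma characterEquivOfIsConj_eq_iff {u v : G} (huv : IsConj u v) {k : G}
    (hk : MulAut.conj k u = v) {χ : Subgroup.centralizer {u} →* A}
    {ψ : Subgroup.centralizer {v} →* A} :
    characterEquivOfIsConj huv χ = ψ ↔
      ∀ x, ψ (centralizerCongr (MulAut.conj k) hk x) = χ x := by
  simp only [MonoidHom.ext_iff, (centralizerCongr (MulAut.conj k) hk).surjective.forall,
    characterEquivOfIsConj_apply, eq_comm]

lemma characterEquivOfIsConj_refl {u : G} (huu : IsConj u u)
    (χ : Subgroup.centralizer {u} →* A) : characterEquivOfIsConj huu χ = χ :=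
  (characterEquivOfIsConj_eq_iff huu (k := 1) (by simp)).2 fun x ↦
    congrArg χ (Subtype.ext (by simp))

lemma characterEquivOfIsConj_trans {u v w : G} (huv : IsConj u v) (hvw : IsConj v w)
    (huw : IsConj u w) (χ : Subgroup.centralizer {u} →* A) :
    characterEquivOfIsConj hvw (characterEquivOfIsConj huv χ) = characterEquivOfIsConj huw χ := by
  obtain ⟨k, hk⟩ := isConj_iff_conj_apply_eq.1 huv
  obtain ⟨l, hl⟩ := isConj_iff_conj_apply_eq.1 hvw
  have hlk : MulAut.conj (l * k) u = w := by rw [map_mul, MulAut.mul_apply, hk, hl]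
  refine ((characterEquivOfIsConj_eq_iff huw hlk).2 fun x ↦ ?_).symm
  rw [← characterEquivOfIsConj_apply huv hk, ← characterEquivOfIsConj_apply hvw hl]
  exact congrArg _ (Subtype.ext (by simp [mul_assoc]))

end CharacterTransport

section Classification

lemma map_univ_val_eq_map_univ_val_iff {ι κ β : Type*} [Fintype ι] [Fintype κ] {f : ι → β}
    {g : κ → β} :
    Finset.univ.val.map f = Finset.univ.val.map g ↔ ∃ e : ι ≃ κ, ∀ i, g (e i) = f i := by
  classical
  refine ⟨fun h ↦ ?_, fun ⟨e, he⟩ ↦ ?_⟩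
  · have hfib (b : β) : Nonempty ({i // f i = b} ≃ {j // g j = b}) := by
      have hb := congrArg (Multiset.count b) h
      rw [Multiset.count_map, Multiset.count_map] at hb
      rw [← Fintype.card_eq, Fintype.card_subtype, Fintype.card_subtype]
      simpa only [Finset.card_def, Finset.filter_val, eq_comm] using hb
    exact ⟨ofFiberEquiv fun b ↦ (hfib b).some, ofFiberEquiv_map _⟩
  · rw [← Multiset.map_univ_val_equiv e, Multiset.map_map]
    exact Multiset.map_congr rfl fun i _ ↦ (he i).symm

lemma exists_map_univ_val_eq {β : Type*} {n : ℕ} (s : Sym β n) :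
    ∃ f : Fin n → β, Finset.univ.val.map f = s := by
  obtain ⟨⟨l⟩, rfl⟩ := s
  exact ⟨l.get, (Fin.univ_val_map _).trans (congrArg _ (List.ofFn_get l))⟩

variable {G : Type*} [Group G]

lemma conjClasses_map_conj (k : G) (C : ConjClasses G) :
    ConjClasses.map (MulAut.conj k : G →* G) C = C := by
  obtain ⟨a, rfl⟩ := ConjClasses.exists_rep C
  exact (ConjClasses.mk_eq_mk_iff_isConj.2 (isConj_iff_conj_apply_eq.2 ⟨k, rfl⟩)).symm

namespace RSC

variable {A B : RSC G}

lemma isConj_u (A : RSC G) {g : G} {C : ConjClasses G} (hg : ConjClasses.mk g = C) :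
    IsConj (A.u C) g :=
  ConjClasses.mk_eq_mk_iff_isConj.1 ((A.hu C).trans hg.symm)

lemma iso_of_forall_exists_equiv
    (H : ∀ C, ∃ σ : Fin (A.r C) ≃ Fin (B.r C), ∀ i,
      characterEquivOfIsConj (A.isConj_u (B.hu C)) (A.chi C i) = B.chi C (σ i)) :
    A.Iso B := by
  refine ⟨MulEquiv.refl G, fun C ↦ ?_⟩
  have hC : ConjClasses.map ((MulEquiv.refl G : G ≃* G) : G →* G) C = C := by
    obtain ⟨a, rfl⟩ := ConjClasses.exists_rep C
    rfl
  rw [hC]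
  obtain ⟨σ, hσ⟩ := H C
  obtain ⟨k, hk⟩ := isConj_iff_conj_apply_eq.1 (A.isConj_u (B.hu C))
  exact ⟨k, hk, fun _ ↦ ⟨σ, fun i x hx _ ↦
    (characterEquivOfIsConj_eq_iff _ hk).1 (hσ i) ⟨x, hx⟩⟩⟩

lemma Iso.exists_equiv (hG : ∀ φ : G ≃* G, ∃ k, φ = MulAut.conj k) (hr : A.r = B.r)
    (hAB : A.Iso B) (C : ConjClasses G) :
    ∃ σ : Fin (A.r C) ≃ Fin (B.r C), ∀ i,
      characterEquivOfIsConj (A.isConj_u (B.hu C)) (A.chi C i) = B.chi C (σ i) := by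
  obtain ⟨φ, hφ⟩ := hAB
  obtain ⟨k, rfl⟩ := hG φ
  have hC := hφ C
  rw [conjClasses_map_conj] at hC
  obtain ⟨h, hu, hχ⟩ := hC
  have hk : MulAut.conj (k * h) (A.u C) = B.u C := by
    rw [map_mul]; exact hu
  by_cases h0 : A.r C = 0
  · exact ⟨finCongr (congrFun hr C), fun i ↦ (Fin.cast h0 i).elim0⟩
  · obtain ⟨σ, hσ⟩ := hχ h0
    refine ⟨σ, fun i ↦ (characterEquivOfIsConj_eq_iff _ hk).2 fun x ↦ ?_⟩
    have hkx : ((centralizerCongr _ hk x : Subgroup.centralizer {B.u C}) : G) =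
      MulAut.conj k (h * x * h⁻¹) := by simp [mul_assoc]
    rw [← hσ i x x.2 (hkx ▸ Subtype.prop _)]
    exact congrArg _ (Subtype.ext hkx)

variable {r : ConjClasses G → ℕ} {u : ConjClasses G → G}

/-- The characters attached to the class `C` as an unordered tuple, transported to the
centralizer of a representative `u C` that does not depend on the ramification system. -/
noncomputable def charSym (hu : ∀ C, ConjClasses.mk (u C) = C) (A : {A : RSC G // A.r = r})
    (C : ConjClasses G) : Sym (Subgroup.centralizer {u C} →* ℂˣ) (r C) :=
  ⟨Finset.univ.val.map fun i ↦ characterEquivOfIsConj (A.1.isConj_u (hu C)) (A.1.chi C i), by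
    rw [Multiset.card_map, Finset.card_val, Finset.card_fin, A.2]⟩

lemma coe_charSym (hu : ∀ C, ConjClasses.mk (u C) = C) (A : {A : RSC G // A.r = r})
    (C : ConjClasses G) : (charSym hu A C : Multiset _) = Finset.univ.val.map fun i ↦
      characterEquivOfIsConj (A.1.isConj_u (hu C)) (A.1.chi C i) := rfl

lemma iso_iff_charSym_eq (hG : ∀ φ : G ≃* G, ∃ k, φ = MulAut.conj k)
    (hu : ∀ C, ConjClasses.mk (u C) = C) (A B : {A : RSC G // A.r = r}) :
    A.1.Iso B.1 ↔ charSym hu A = charSym hu B := by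
  have hchi (C : ConjClasses G) (i : Fin (A.1.r C)) (j : Fin (B.1.r C)) :
      characterEquivOfIsConj (B.1.isConj_u (hu C)) (B.1.chi C j) =
          characterEquivOfIsConj (A.1.isConj_u (hu C)) (A.1.chi C i) ↔
        characterEquivOfIsConj (A.1.isConj_u (B.1.hu C)) (A.1.chi C i) = B.1.chi C j := by
    rw [← characterEquivOfIsConj_trans (A.1.isConj_u (B.1.hu C)) (B.1.isConj_u (hu C)),
      Equiv.apply_eq_iff_eq, eq_comm]
  have hcharSym (C : ConjClasses G) : charSym hu A C = charSym hu B C ↔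
      ∃ σ : Fin (A.1.r C) ≃ Fin (B.1.r C), ∀ i,
        characterEquivOfIsConj (A.1.isConj_u (B.1.hu C)) (A.1.chi C i) = B.1.chi C (σ i) := by
    rw [← Sym.coe_injective.eq_iff, coe_charSym, coe_charSym, map_univ_val_eq_map_univ_val_iff]
    simp only [hchi]
  simp only [funext_iff, hcharSym]
  exact ⟨Iso.exists_equiv hG (A.2.trans B.2.symm), iso_of_forall_exists_equiv⟩

lemma charSym_surjective (hu : ∀ C, ConjClasses.mk (u C) = C) :
    Function.Surjective (charSym hu : {A : RSC G // A.r = r} → _) := by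
  intro s
  choose f hf using fun C ↦ exists_map_univ_val_eq (s C)
  refine ⟨⟨⟨r, u, hu, f⟩, rfl⟩, funext fun C ↦ Sym.coe_injective ?_⟩
  refine (Multiset.map_congr rfl fun i _ ↦ ?_).trans (hf C)
  exact characterEquivOfIsConj_refl _ _

lemma card_quot_iso [Fintype (ConjClasses G)] (hG : ∀ φ : G ≃* G, ∃ k, φ = MulAut.conj k)
    (hu : ∀ C, ConjClasses.mk (u C) = C) (r : ConjClasses G → ℕ) :
    Nat.card (Quot fun A B : {A : RSC G // A.r = r} ↦ A.1.Iso B.1) =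
      ∏ C, (Nat.card (Subgroup.centralizer {u C} →* ℂˣ) + r C - 1).choose (r C) := by
  have hker : (fun A B : {A : RSC G // A.r = r} ↦ A.1.Iso B.1) = Setoid.ker (charSym hu) :=
    funext₂ fun A B ↦ propext (iso_iff_charSym_eq hG hu A B)
  rw [hker]
  refine (Nat.card_congr (Setoid.quotientKerEquivOfSurjective _ (charSym_surjective hu))).trans ?_
  simp only [Nat.card_pi, Sym.natCard_sym_eq_choose]

end RSC

end Classification

/-- Let `G = S_n` with `n` a positive integer, `n ≠ 6`, and let `r` be a ramification
of `G`.  Then the number `N(G, r)` of isomorphism classes of ramification systems with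
characters of `G` with ramification `r` equals
`∏_{C ∈ K_r(G)} C(γ_C + r_C − 1, r_C)`, where for a conjugacy class `C` of cycle type
`1^{λ_1} 2^{λ_2} ⋯ n^{λ_n}` one sets `γ_C = (∏_{i : λ_i = 1} i) · (∏_{i : λ_i ≥ 2} 2i)`. -/
theorem card_rsc_classes_symmetricGroup (n : ℕ) (hn : 0 < n) (h6 : n ≠ 6)
    (r : ConjClasses (Equiv.Perm (Fin n)) → ℕ)
    (γ : ConjClasses (Equiv.Perm (Fin n)) → ℕ)
    (hγ : ∀ g : Equiv.Perm (Fin n),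
      γ (ConjClasses.mk g) =
        (∏ i ∈ (Finset.range (n + 1)).filter fun i => lamOf g i = 1, i) *
        (∏ i ∈ (Finset.range (n + 1)).filter fun i => 2 ≤ lamOf g i, 2 * i)) :
    Nat.card
        (Quot fun A B : {A : RSC (Equiv.Perm (Fin n)) // A.r = r} =>
          RSC.Iso A.1 B.1) =
      ∏ C ∈ Finset.univ.filter
          fun C : ConjClasses (Equiv.Perm (Fin n)) => r C ≠ 0,
        Nat.choose (γ C + r C - 1) (r C) := by
  have hG := exists_eq_conj_of_card_ne_six (α := Fin n) (by rwa [Fintype.card_fin])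
  let u : ConjClasses (Perm (Fin n)) → Perm (Fin n) := Quotient.out
  have hu : ∀ C, ConjClasses.mk (u C) = C := Quotient.out_eq
  have hγu (C) : Nat.card (Subgroup.centralizer {u C} →* ℂˣ) = γ C := by
    rw [card_centralizer_characters_eq_prod_lamOf, ← hγ, hu]
  rw [RSC.card_quot_iso hG hu, Finset.prod_filter]
  refine Finset.prod_congr rfl fun C _ ↦ ?_
  rw [hγu]
  split_ifs with hC
  · rfl
  · rw [not_not.1 hC, Nat.choose_zero_right]
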